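/- arXiv:math/0405425 — 2 statements merged into one kernel-verified Lean document; each statement's English description precedes it below -/
import Mathlib

section
/- Let [(Qᵢ,𝒬ᵢ),Tᵢ,(Δᵢ,𝒟ᵢ)], i = 1,2, be two generators and (f,g) a transition-preserving map from T₁ to T₂. Then for every probability measure μ on (Q₁,𝒬₁), the path measure of T₂ started from the pushforward f_*(μ) equals the pushforward of the path measure of T₁ started from μ under the coordinatewise map g^ℕ: Δ₁^ℕ → Δ₂^ℕ, (yₙ)ₙ ↦ (g(yₙ))ₙ; i.e. G_{T₂}(f_*(μ)) = (g^ℕ)_*(G_{T₁}(μ)). In particular, if a stochastic process (Yₙ)_{n∈ℕ} in (Δ₁,𝒟₁) is generated by T₁, then the process (g∘Yₙ)_{n∈ℕ} in (Δ₂,𝒟₂) is generated by T₂. -/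
open MeasureTheory ProbabilityTheory
open scoped ENNReal

namespace HiddenSources

variable {Q Δ : Type*}

/-- The iterated integral appearing in the finite-dimensional marginals:
`fdmAux T n x B = ∫_{Q×B₁}⋯∫_{Q×Bₙ} T(x_{n-1}, d(xₙ,yₙ)) ⋯ T(x, d(x₁,y₁))`. -/
noncomputable def fdmAux [MeasurableSpace Q] [MeasurableSpace Δ] (T : Kernel Q (Q × Δ)) :
    (n : ℕ) → Q → (Fin n → Set Δ) → ℝ≥0∞
  | 0, _, _ => 1
  | n + 1, x, B =>
      ∫⁻ p : Q × Δ, Set.indicator (B 0) (fun _ => fdmAux T n p.1 fun i => B i.succ) p.2 ∂(T x)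

/-- The finite-dimensional marginal `Pₙ^{μ,T}(B₁ × ⋯ × Bₙ)` of the observed process of the
generator `T` with initial distribution `μ`. -/
noncomputable def fdm [MeasurableSpace Q] [MeasurableSpace Δ] (T : Kernel Q (Q × Δ))
    (μ : Measure Q) (n : ℕ) (B : Fin n → Set Δ) : ℝ≥0∞ :=
  ∫⁻ x, fdmAux T n x B ∂μ

/-- `P` is the path measure `P^{μ,T}` on `Δ^ℕ`: a probability measure whose cylinder
sets have measure given by the finite-dimensional marginals `Pₙ^{μ,T}`. -/
def IsPathMeasure [MeasurableSpace Q] [MeasurableSpace Δ] (T : Kernel Q (Q × Δ))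
    (μ : Measure Q) (P : Measure (ℕ → Δ)) : Prop :=
  IsProbabilityMeasure P ∧
    ∀ (n : ℕ) (B : Fin n → Set Δ), (∀ i, MeasurableSet (B i)) →
      P {y | ∀ i : Fin n, y i ∈ B i} = fdm T μ n B

/-- `im(G_T)`: the set of stochastic processes (identified with their path measures on
`Δ^ℕ`) generated by `T`, as the initial distribution `μ` ranges over the probability
measures on `Q`. -/
def genSet [MeasurableSpace Q] [MeasurableSpace Δ] (T : Kernel Q (Q × Δ)) :
    Set (Measure (ℕ → Δ)) :=
  {P | ∃ μ : Measure Q, IsProbabilityMeasure μ ∧ IsPathMeasure T μ P}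

/-- `(f, g)` is a transition-preserving map (morphism of generators) from `T₁` to `T₂`:
`f`, `g` are measurable and `T₂(f(x), A × B) = T₁(x, f⁻¹(A) × g⁻¹(B))` for all `x`
and measurable `A`, `B`. -/
def TransitionPreserving {Q₁ Q₂ Δ₁ Δ₂ : Type*}
    [MeasurableSpace Q₁] [MeasurableSpace Q₂] [MeasurableSpace Δ₁] [MeasurableSpace Δ₂]
    (T₁ : Kernel Q₁ (Q₁ × Δ₁)) (T₂ : Kernel Q₂ (Q₂ × Δ₂))
    (f : Q₁ → Q₂) (g : Δ₁ → Δ₂) : Prop :=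
  Measurable f ∧ Measurable g ∧
    ∀ (x : Q₁) (A : Set Q₂) (B : Set Δ₂), MeasurableSet A → MeasurableSet B →
      T₂ (f x) (A ×ˢ B) = T₁ x ((f ⁻¹' A) ×ˢ (g ⁻¹' B))

/-!
A finite measure on a product is determined by its values on rectangles, so transition
preservation says that the one-step law `T₂ (f x)` is the pushforward of `T₁ x` under `f × g`.
Changing variables at each step of the iterated integral then shows, by induction on `n`, that
the marginals of `T₂` started at `f x` on `B₁ × ⋯ × Bₙ` are those of `T₁` started at `x` on
`g⁻¹(B₁) × ⋯ × g⁻¹(Bₙ)`.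
-/

section Marginals

variable [MeasurableSpace Q] [MeasurableSpace Δ] (T : Kernel Q (Q × Δ)) {n : ℕ}

lemma fdmAux_succ (x : Q) {B : Fin (n + 1) → Set Δ} (hB : MeasurableSet (B 0)) :
    fdmAux T (n + 1) x B =
      ∫⁻ p in Prod.snd ⁻¹' B 0, fdmAux T n p.1 (fun i => B i.succ) ∂T x :=
  lintegral_indicator (measurable_snd hB) fun p : Q × Δ => fdmAux T n p.1 fun i => B i.succ

lemma measurable_fdmAux {B : Fin n → Set Δ} (hB : ∀ i, MeasurableSet (B i)) :
    Measurable fun x => fdmAux T n x B := by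
  induction n with
  | zero => exact measurable_const
  | succ n ih =>
    simp only [fdmAux_succ T _ (hB 0)]
    exact ((ih fun i => hB i.succ).comp measurable_fst).lintegral_kernel
      (κ := T.restrict (measurable_snd (hB 0)))

end Marginals

section Morphisms

variable {Q₁ Q₂ Δ₁ Δ₂ : Type*}
  [MeasurableSpace Q₁] [MeasurableSpace Q₂] [MeasurableSpace Δ₁] [MeasurableSpace Δ₂]
  {T₁ : Kernel Q₁ (Q₁ × Δ₁)} {T₂ : Kernel Q₂ (Q₂ × Δ₂)} [IsFiniteKernel T₁]
  {f : Q₁ → Q₂} {g : Δ₁ → Δ₂} {n : ℕ} {B : Fin n → Set Δ₂}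

lemma TransitionPreserving.apply_eq_map (hfg : TransitionPreserving T₁ T₂ f g) (x : Q₁) :
    T₂ (f x) = (T₁ x).map (Prod.map f g) := by
  obtain ⟨hf, hg, hT⟩ := hfg
  refine (Measure.ext_prod fun {A B} hA hB => ?_).symm
  rw [Measure.map_apply (hf.prodMap hg) (hA.prod hB), hT x A B hA hB, Set.preimage_prod_map_prod]

lemma TransitionPreserving.fdmAux_eq_fdmAux_preimage (hfg : TransitionPreserving T₁ T₂ f g)
    (hB : ∀ i, MeasurableSet (B i)) (x : Q₁) :
    fdmAux T₂ n (f x) B = fdmAux T₁ n x fun i => g ⁻¹' B i := by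
  induction n generalizing x with
  | zero => rfl
  | succ n ih =>
    have hB' : ∀ i : Fin n, MeasurableSet (B i.succ) := fun i => hB i.succ
    have hf : Measurable f := hfg.1
    have hg : Measurable g := hfg.2.1
    calc fdmAux T₂ (n + 1) (f x) B
      _ = ∫⁻ q in Prod.snd ⁻¹' B 0, fdmAux T₂ n q.1 (fun i => B i.succ)
            ∂(T₁ x).map (Prod.map f g) := by
        rw [fdmAux_succ T₂ _ (hB 0), hfg.apply_eq_map]
      _ = ∫⁻ p in Prod.snd ⁻¹' (g ⁻¹' B 0), fdmAux T₂ n (f p.1) (fun i => B i.succ) ∂T₁ x :=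
        setLIntegral_map (measurable_snd (hB 0))
          ((measurable_fdmAux T₂ hB').comp measurable_fst) (hf.prodMap hg)
      _ = ∫⁻ p in Prod.snd ⁻¹' (g ⁻¹' B 0), fdmAux T₁ n p.1 (fun i => g ⁻¹' B i.succ) ∂T₁ x := by
        simp only [ih hB']
      _ = fdmAux T₁ (n + 1) x fun i => g ⁻¹' B i :=
        (fdmAux_succ T₁ x (B := fun i => g ⁻¹' B i) (hg (hB 0))).symm

lemma TransitionPreserving.fdm_map_eq_fdm_preimage (hfg : TransitionPreserving T₁ T₂ f g)
    (hB : ∀ i, MeasurableSet (B i)) (μ : Measure Q₁) :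
    fdm T₂ (μ.map f) n B = fdm T₁ μ n fun i => g ⁻¹' B i := by
  simp only [fdm, lintegral_map (measurable_fdmAux T₂ hB) hfg.1, hfg.fdmAux_eq_fdmAux_preimage hB]

lemma IsPathMeasure.map {μ : Measure Q₁} {P : Measure (ℕ → Δ₁)} (hP : IsPathMeasure T₁ μ P)
    (hfg : TransitionPreserving T₁ T₂ f g) :
    IsPathMeasure T₂ (μ.map f) (P.map fun y n => g (y n)) := by
  obtain ⟨hP_prob, hP_cyl⟩ := hP
  have hg : Measurable g := hfg.2.1
  have hgℕ : Measurable fun (y : ℕ → Δ₁) n => g (y n) := by fun_prop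
  refine ⟨Measure.isProbabilityMeasure_map hgℕ.aemeasurable, fun n B hB => ?_⟩
  have hcyl : MeasurableSet {y : ℕ → Δ₂ | ∀ i : Fin n, y i ∈ B i} := by
    simp only [Set.ofPred_forall]
    exact .iInter fun i => measurable_pi_apply (i : ℕ) (hB i)
  rw [Measure.map_apply hgℕ hcyl, hfg.fdm_map_eq_fdm_preimage hB]
  exact hP_cyl n (fun i => g ⁻¹' B i) fun i => hg (hB i)

end Morphisms

theorem pathMeasure_map_general {Q₁ Q₂ Δ₁ Δ₂ : Type*}
    [MeasurableSpace Q₁] [MeasurableSpace Q₂] [MeasurableSpace Δ₁] [MeasurableSpace Δ₂]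
    (T₁ : Kernel Q₁ (Q₁ × Δ₁)) (T₂ : Kernel Q₂ (Q₂ × Δ₂)) [IsFiniteKernel T₁]
    (f : Q₁ → Q₂) (g : Δ₁ → Δ₂) (hfg : TransitionPreserving T₁ T₂ f g) :
    (∀ (μ : Measure Q₁) (P : Measure (ℕ → Δ₁)), IsPathMeasure T₁ μ P →
        IsPathMeasure T₂ (μ.map f) (P.map fun y n => g (y n))) ∧
      ∀ P ∈ genSet T₁, P.map (fun y n => g (y n)) ∈ genSet T₂ := by
  refine ⟨fun _ _ hP => hP.map hfg, ?_⟩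
  rintro P ⟨μ, _, hP⟩
  exact ⟨μ.map f, Measure.isProbabilityMeasure_map hfg.1.aemeasurable, hP.map hfg⟩

/-- **Theorem 3.2.** If `(f,g)` is a transition-preserving map from `T₁` to `T₂`, then
`G_{T₂}(f_*(μ)) = (g^ℕ)_*(G_{T₁}(μ))` for every initial probability measure `μ`; in
particular, if a process is generated by `T₁`, then its image under the coordinatewise
map `g^ℕ` is generated by `T₂`. -/
theorem pathMeasure_map {Q₁ Q₂ Δ₁ Δ₂ : Type*}
    [MeasurableSpace Q₁] [MeasurableSpace Q₂] [MeasurableSpace Δ₁] [MeasurableSpace Δ₂]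
    (T₁ : Kernel Q₁ (Q₁ × Δ₁)) (T₂ : Kernel Q₂ (Q₂ × Δ₂))
    [IsMarkovKernel T₁] [IsMarkovKernel T₂]
    (f : Q₁ → Q₂) (g : Δ₁ → Δ₂) (hfg : TransitionPreserving T₁ T₂ f g) :
    (∀ (μ : Measure Q₁), IsProbabilityMeasure μ → ∀ P : Measure (ℕ → Δ₁),
        IsPathMeasure T₁ μ P →
          IsPathMeasure T₂ (μ.map f) (P.map fun y n => g (y n))) ∧
      ∀ P ∈ genSet T₁, P.map (fun y n => g (y n)) ∈ genSet T₂ := by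
  obtain ⟨hmap, hgen⟩ := pathMeasure_map_general T₁ T₂ f g hfg
  exact ⟨fun μ _ P hP => hmap μ P hP, hgen⟩

end HiddenSources
end

section
/- Let (Q,𝒬) and (Δ,𝒟) be measurable spaces, and let f: Q → Q and g: Q → Δ be measurable maps. Consider the generator [(Q,𝒬),T,(Δ,𝒟)] defined by T(x, A×B) := 1 if f(x) ∈ A and g(f(x)) ∈ B, and 0 otherwise. Then σ_Q(T) = σ(g∘f, g∘f², g∘f³, …), the σ-algebra generated by the maps g∘fᵏ: Q → Δ for k = 1,2,3,…. -/
open MeasureTheory ProbabilityTheory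
open scoped ENNReal Classical

namespace HiddenSources

variable {Q Δ : Type*}

/-- A σ-subalgebra `𝒜 ≤ 𝒬` such that `T(·,C)` is `𝒜`-measurable for every
`C ∈ 𝒜 ⊗ 𝒟`. -/
def IsSufficientAlgebra [mQ : MeasurableSpace Q] [mΔ : MeasurableSpace Δ]
    (T : Kernel Q (Q × Δ)) (𝒜 : MeasurableSpace Q) : Prop :=
  𝒜 ≤ mQ ∧ ∀ C : Set (Q × Δ), MeasurableSet[𝒜.prod mΔ] C → Measurable[𝒜] fun x => T x C

/-- `σ_Q(T)`: the smallest σ-subalgebra of `𝒬` such that `T(·,C)` is `σ_Q(T)`-measurable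
for all `C ∈ σ_Q(T) ⊗ 𝒟`, obtained as the intersection of all σ-subalgebras with this
invariance property. -/
def sigmaQ [mQ : MeasurableSpace Q] [mΔ : MeasurableSpace Δ] (T : Kernel Q (Q × Δ)) :
    MeasurableSpace Q :=
  sInf {𝒜 | @IsSufficientAlgebra Q Δ mQ mΔ T 𝒜}

/-!
For a kernel of Dirac measures `T x = δ (f x, h x)`, the function `T(·, C)` is the indicator of the
preimage of `C` under `x ↦ (f x, h x)`. Hence a σ-subalgebra is sufficient exactly when `f` and `h`
are measurable with respect to it, and the smallest σ-algebra with this property is the one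
generated by the maps `h ∘ fᵏ`, `k ≥ 0`; it lies below `𝒬` because `𝒬` itself is sufficient. The
theorem is the case `h = g ∘ f`.
-/

theorem eq_dirac_of_apply_prod {α β : Type*} [MeasurableSpace α] [MeasurableSpace β]
    {μ : Measure (α × β)} {a : α} {b : β}
    (hμ : ∀ (A : Set α) (B : Set β), MeasurableSet A → MeasurableSet B →
      μ (A ×ˢ B) = if a ∈ A ∧ b ∈ B then 1 else 0) :
    μ = Measure.dirac (a, b) := by
  have : IsProbabilityMeasure μ := ⟨by simpa using hμ _ _ .univ .univ⟩
  refine Measure.ext_prod fun {A B} hA hB => ?_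
  rw [hμ A B hA hB, Measure.dirac_apply' _ (hA.prod hB)]
  simp [Set.indicator_apply]

theorem isLeast_iSup_comap_iterate [mΔ : MeasurableSpace Δ] (f : Q → Q) (h : Q → Δ) :
    IsLeast {m : MeasurableSpace Q | Measurable[m, m] f ∧ Measurable[m] h}
      (⨆ k : ℕ, mΔ.comap fun x => h (f^[k] x)) := by
  have comap_le (k : ℕ) : (mΔ.comap fun x => h (f^[k] x)) ≤ ⨆ k, mΔ.comap fun x => h (f^[k] x) :=
    le_iSup (fun k => mΔ.comap fun x => h (f^[k] x)) k
  refine ⟨⟨?_, Measurable.of_comap_le (comap_le 0)⟩, fun m ⟨hf, hh⟩ => ?_⟩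
  · rw [measurable_iff_comap_le, MeasurableSpace.comap_iSup]
    refine iSup_le fun k => ?_
    rw [MeasurableSpace.comap_comp]
    exact comap_le (k + 1)
  · exact iSup_le fun k => (hh.comp (hf.iterate k)).comap_le

theorem isSufficientAlgebra_self [mQ : MeasurableSpace Q] [MeasurableSpace Δ]
    (T : Kernel Q (Q × Δ)) : IsSufficientAlgebra T mQ :=
  ⟨le_rfl, fun _ => T.measurable_coe⟩

theorem isSufficientAlgebra_iff_of_dirac {𝒜 : MeasurableSpace Q} [mQ : MeasurableSpace Q]
    [mΔ : MeasurableSpace Δ] {T : Kernel Q (Q × Δ)} {f : Q → Q} {h : Q → Δ}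
    (hT : ∀ x, T x = Measure.dirac (f x, h x)) :
    IsSufficientAlgebra T 𝒜 ↔ 𝒜 ≤ mQ ∧ Measurable[𝒜, 𝒜] f ∧ Measurable[𝒜] h := by
  refine and_congr_right fun h𝒜 => ?_
  have prod_le : 𝒜.prod mΔ ≤ mQ.prod mΔ := sup_le_sup_right (MeasurableSpace.comap_mono h𝒜) _
  have apply_eq_indicator (C : Set (Q × Δ)) (hC : MeasurableSet[𝒜.prod mΔ] C) :
      (fun x => T x C) = ((fun x => (f x, h x)) ⁻¹' C).indicator fun _ => 1 := by
    ext x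
    rw [hT, Measure.dirac_apply' _ (prod_le C hC)]
    rfl
  calc (∀ C, MeasurableSet[𝒜.prod mΔ] C → Measurable[𝒜] fun x => T x C)
    _ ↔ ∀ C, MeasurableSet[𝒜.prod mΔ] C → MeasurableSet[𝒜] ((fun x => (f x, h x)) ⁻¹' C) :=
      forall₂_congr fun C hC => by
        rw [apply_eq_indicator C hC, measurable_indicator_const_iff]
    _ ↔ Measurable[𝒜, 𝒜.prod mΔ] fun x => (f x, h x) := Iff.rfl
    _ ↔ Measurable[𝒜, 𝒜] f ∧ Measurable[𝒜] h := measurable_fun_prod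

theorem sigmaQ_deterministic_general [mQ : MeasurableSpace Q] [mΔ : MeasurableSpace Δ]
    (f : Q → Q) (h : Q → Δ) (T : Kernel Q (Q × Δ))
    (hT : ∀ (x : Q) (A : Set Q) (B : Set Δ), MeasurableSet A → MeasurableSet B →
      T x (A ×ˢ B) = if f x ∈ A ∧ h x ∈ B then 1 else 0) :
    sigmaQ T = ⨆ k : ℕ, mΔ.comap fun x => h (f^[k] x) := by
  have hdirac (x : Q) : T x = Measure.dirac (f x, h x) := eq_dirac_of_apply_prod (hT x)
  obtain ⟨measurable_fh, least⟩ := isLeast_iSup_comap_iterate f h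
  have le_mQ : ⨆ k : ℕ, mΔ.comap (fun x => h (f^[k] x)) ≤ mQ :=
    least ((isSufficientAlgebra_iff_of_dirac hdirac).1 (isSufficientAlgebra_self T)).2
  refine le_antisymm (sInf_le ?_) (le_sInf fun 𝒜 h𝒜 => ?_)
  · exact (isSufficientAlgebra_iff_of_dirac hdirac).2 ⟨le_mQ, measurable_fh⟩
  · exact least ((isSufficientAlgebra_iff_of_dirac (mQ := mQ) hdirac).1 h𝒜).2

/-- **Theorem 4.2.** For the deterministic generator `T(x, A × B) = 1` if `f(x) ∈ A` and
`g(f(x)) ∈ B`, else `0`, one has `σ_Q(T) = σ(g∘f, g∘f², g∘f³, …)`, the σ-algebra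
generated by the maps `g ∘ fᵏ`, `k ≥ 1`. -/
theorem sigmaQ_deterministic [mQ : MeasurableSpace Q] [mΔ : MeasurableSpace Δ]
    (f : Q → Q) (g : Q → Δ) (hf : Measurable f) (hg : Measurable g)
    (T : Kernel Q (Q × Δ)) [IsMarkovKernel T]
    (hT : ∀ (x : Q) (A : Set Q) (B : Set Δ), MeasurableSet A → MeasurableSet B →
      T x (A ×ˢ B) = if f x ∈ A ∧ g (f x) ∈ B then 1 else 0) :
    sigmaQ T = ⨆ k : ℕ, mΔ.comap fun x => g (f^[k + 1] x) := by
  simpa only [Function.iterate_succ_apply'] using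
    sigmaQ_deterministic_general f (fun x => g (f x)) T hT

end HiddenSources
end
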